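/- arXiv:1703.04972 — 3 statements merged into one kernel-verified Lean document; each statement's English description precedes it below -/
import Mathlib

section
/- Let Δ_P be the Hantzsche–Wendt group and let α, β be any pair of elements generating Δ_P. Set γ = αβ, a = α², b = β², c = γ². Then a, b, c pairwise commute, and moreover β⁻¹aβ = a⁻¹, γ⁻¹aγ = a⁻¹, α⁻¹bα = b⁻¹, γ⁻¹bγ = b⁻¹, α⁻¹cα = c⁻¹, and β⁻¹cβ = c⁻¹. -/
open FreeGroup in
/-- Relators of the Hantzsche–Wendt group: `x⁻¹y²xy²` and `y⁻¹x²yx²`,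
encoding the relations `x⁻¹y²x = y⁻²` and `y⁻¹x²y = x⁻²`. -/
def hwRels : Set (FreeGroup (Fin 2)) :=
  {(of 0)⁻¹ * of 1 ^ 2 * of 0 * of 1 ^ 2,
   (of 1)⁻¹ * of 0 ^ 2 * of 1 * of 0 ^ 2}

/-- The Hantzsche–Wendt group `Δ_P = ⟨x, y ∣ x⁻¹y²x = y⁻², y⁻¹x²y = x⁻²⟩`. -/
abbrev HantzscheWendtGroup : Type := PresentedGroup hwRels

/-- The generator `x` of the Hantzsche–Wendt group. -/
def hwX : HantzscheWendtGroup := PresentedGroup.of 0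

/-- The generator `y` of the Hantzsche–Wendt group. -/
def hwY : HantzscheWendtGroup := PresentedGroup.of 1

/-!
Write `A = x²`, `B = y²`, `C = (xy)²`. The relations say that `x` inverts `B` and `y` inverts `A`,
and they force `x` and `y` to invert `C`; hence `A`, `B`, `C` commute and generate a normal
subgroup `T` with Klein four quotient `{1, x, y, xy}`. Since `x` commutes with `A` and inverts `B`
and `C`, every element of `xT` has its square in `⟨A⟩` and acts on `T` like `x`, and similarly for
`yT` and `xyT`. A generating pair maps to two distinct nontrivial elements of the Klein four group,
so it lies in two different cosets among `xT`, `yT`, `xyT`, and therefore satisfies the same two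
relations as `x`, `y`.
-/

section Group

variable {G : Type*} [Group G]

theorem normal_of_closure_eq_top {S : Set G} (hS : Subgroup.closure S = ⊤) {H : Subgroup G}
    (h : S ⊆ Subgroup.normalizer (H : Set G)) : H.Normal := by
  rwa [← Subgroup.normalizer_eq_top_iff, ← top_le_iff, ← hS, Subgroup.closure_le]

theorem exists_mul_eq_of_mem_sup_of_le_centralizer {H K : Subgroup G}
    (h : H ≤ Subgroup.centralizer K) {g : G} (hg : g ∈ H ⊔ K) : ∃ a ∈ H, ∃ b ∈ K, a * b = g := by
  rwa [← SetLike.mem_coe, Subgroup.coe_mul_of_left_le_normalizer_right H K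
    (h.trans (Subgroup.centralizer_le_normalizer _))] at hg

theorem zpowers_le_centralizer_zpowers {a b : G} (h : Commute a b) :
    Subgroup.zpowers a ≤ Subgroup.centralizer (Subgroup.zpowers b) := by
  rw [Subgroup.zpowers_le, Subgroup.mem_centralizer_iff]
  rintro _ ⟨k, rfl⟩
  exact (h.zpow_right k).symm

theorem eq_of_closure_pair_eq_top_of_sq_eq_one {a b : G}
    (hgen : Subgroup.closure {a, b} = ⊤) (ha : a ^ 2 = 1) (hb : b ^ 2 = 1)
    (hab : (a * b) ^ 2 = 1) (g : G) : g = 1 ∨ g = a ∨ g = b ∨ g = a * b := by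
  rw [pow_two] at ha hb
  have ha' : a⁻¹ = a := inv_eq_of_mul_eq_one_left ha
  have hb' : b⁻¹ = b := inv_eq_of_mul_eq_one_left hb
  have hba : b * a = a * b := by
    rw [pow_two, ← inv_eq_iff_mul_eq_one, mul_inv_rev, ha', hb'] at hab
    exact hab
  have hmul_a (w : G) : a * (a * w) = w := by rw [← mul_assoc, ha, one_mul]
  have hmul_b : b * (a * b) = a := by rw [← mul_assoc, hba, mul_assoc, hb, mul_one]
  have hg : g ∈ Subgroup.closure {a, b} := hgen ▸ Subgroup.mem_top g
  induction hg using Subgroup.closure_induction_left with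
  | one => exact Or.inl rfl
  | mul_left u hu v _ hv =>
    rcases hu with rfl | rfl <;> rcases hv with rfl | rfl | rfl | rfl <;>
      simp only [mul_one, ha, hb, hba, hmul_a, hmul_b, true_or, or_true]
  | inv_mul_cancel u hu v _ hv =>
    rcases hu with rfl | rfl <;> rcases hv with rfl | rfl | rfl | rfl <;>
      simp only [mul_one, ha', hb', ha, hb, hba, hmul_a, hmul_b, true_or, or_true]

theorem ne_of_closure_pair_eq_top_of_not_isCyclic {a b : G} (hG : ¬ IsCyclic G)
    (hgen : Subgroup.closure {a, b} = ⊤) : a ≠ 1 ∧ b ≠ 1 ∧ a ≠ b := by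
  have hsingle (g : G) : Subgroup.closure {g} ≠ ⊤ := fun hg =>
    hG (isCyclic_iff_exists_zpowers_eq_top.2 ⟨g, (Subgroup.zpowers_eq_closure g).trans hg⟩)
  refine ⟨?_, ?_, ?_⟩ <;> rintro rfl
  · exact hsingle b (by rwa [Subgroup.closure_insert_one] at hgen)
  · exact hsingle a (by rwa [Set.pair_comm, Subgroup.closure_insert_one] at hgen)
  · exact hsingle a (by rwa [Set.pair_eq_singleton] at hgen)

/-- `Inverts t a` says that conjugation by `t` sends `a` to `a⁻¹`. It is phrased through
`SemiconjBy`, as `t * a = a⁻¹ * t`, so that the library's lemmas on semiconjugation apply. -/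
def Inverts (t a : G) : Prop := SemiconjBy t a a⁻¹

namespace Inverts

variable {s t a b : G}

theorem inv_right (h : Inverts t a) : SemiconjBy t a⁻¹ a := by
  simpa only [inv_inv] using SemiconjBy.inv_right h

theorem conj_eq_inv (h : Inverts t a) : t⁻¹ * a * t = a⁻¹ := by
  rw [mul_assoc, ← h.inv_right.eq, inv_mul_cancel_left]

theorem of_conj_mul_eq_one (h : t⁻¹ * a * t * a = 1) : Inverts t a := by
  rw [mul_assoc, mul_assoc, inv_mul_eq_one] at h
  rw [Inverts, SemiconjBy, eq_inv_mul_iff_mul_eq, ← h]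

theorem mul_left (h : Inverts t a) (hs : Commute s a) : Inverts (s * t) a :=
  SemiconjBy.mul_left hs.inv_right h

theorem mul_right (h : Inverts t a) (hs : Commute s a) : Inverts (t * s) a :=
  SemiconjBy.mul_left h hs

theorem commute_sq (h : Inverts t a) : Commute (t ^ 2) a := by
  rw [pow_two]
  exact SemiconjBy.mul_left h.inv_right h

theorem of_mem_zpowers (h : Inverts t a) (hb : b ∈ Subgroup.zpowers a) : Inverts t b := by
  obtain ⟨k, rfl⟩ := hb
  simpa only [Inverts, inv_zpow] using SemiconjBy.zpow_right h k

theorem of_mem_zpowers_sup (ha : Inverts t a) (hb : Inverts t b) (hab : Commute a b) {n : G}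
    (hn : n ∈ Subgroup.zpowers a ⊔ Subgroup.zpowers b) : Inverts t n := by
  obtain ⟨_, ⟨i, rfl⟩, _, ⟨j, rfl⟩, rfl⟩ :=
    exists_mul_eq_of_mem_sup_of_le_centralizer (zpowers_le_centralizer_zpowers hab) hn
  have hi : Inverts t (a ^ i) := ha.of_mem_zpowers ⟨i, rfl⟩
  have hj : Inverts t (b ^ j) := hb.of_mem_zpowers ⟨j, rfl⟩
  rw [Inverts, mul_inv_rev, ← ((hab.zpow_zpow i j).inv_inv).eq]
  exact SemiconjBy.mul_right hi hj

theorem mul_sq (h : Inverts t a) : (t * a) ^ 2 = t ^ 2 := by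
  calc (t * a) ^ 2 = t * (a * (t * a)) := by rw [pow_two, mul_assoc]
    _ = t ^ 2 := by rw [SemiconjBy.eq h, mul_inv_cancel_left, pow_two]

theorem mem_normalizer_zpowers (h : Inverts t a) :
    t ∈ Subgroup.normalizer (Subgroup.zpowers a : Set G) := by
  rw [Subgroup.mem_normalizer_iff_map_conj_eq, MonoidHom.map_zpowers, MonoidHom.coe_coe,
    MulAut.conj_apply, SemiconjBy.eq h, mul_inv_cancel_right, Subgroup.zpowers_inv]

end Inverts

/-- `IsHWPair x y` says that `x` and `y` satisfy the defining relations of the Hantzsche–Wendt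
group, each inverting the square of the other. -/
structure IsHWPair (x y : G) : Prop where
  inverts_sq_right : Inverts x (y ^ 2)
  inverts_sq_left : Inverts y (x ^ 2)

namespace IsHWPair

variable {x y : G}

theorem symm (h : IsHWPair x y) : IsHWPair y x := ⟨h.inverts_sq_left, h.inverts_sq_right⟩

theorem commute_sq (h : IsHWPair x y) : Commute (x ^ 2) (y ^ 2) := h.inverts_sq_right.commute_sq

theorem inverts_mul_sq (h : IsHWPair x y) : Inverts x ((x * y) ^ 2) := by
  have hinv : x * (x * y) ^ 2 * (y * x * y) = 1 := by
    calc x * (x * y) ^ 2 * (y * x * y) = x ^ 2 * y * (x * y ^ 2) * x * y := by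
          simp only [pow_two, mul_assoc]
      _ = x ^ 2 * (y⁻¹ * x ^ 2 * y) := by
          rw [h.inverts_sq_right.eq]
          simp only [pow_two, mul_inv_rev, mul_assoc, mul_inv_cancel_left]
      _ = 1 := by rw [h.inverts_sq_left.conj_eq_inv, mul_inv_cancel]
  rw [Inverts, SemiconjBy, eq_inv_of_mul_eq_one_left hinv]
  simp only [pow_two, mul_inv_rev, mul_assoc, inv_mul_cancel, mul_one]

theorem mul_right (h : IsHWPair x y) : IsHWPair x (x * y) where
  inverts_sq_right := h.inverts_mul_sq
  inverts_sq_left := h.inverts_sq_left.mul_left ((Commute.refl x).pow_right 2)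

theorem mul_left (h : IsHWPair x y) : IsHWPair y (x * y) where
  inverts_sq_right := by
    have hinv : Inverts x⁻¹ ((x * y) ^ 2) := h.inverts_mul_sq.inv_right.inv_symm_left
    simpa only [inv_mul_cancel_left] using hinv.mul_right (Commute.self_pow (x * y) 2)
  inverts_sq_left := h.inverts_sq_right.mul_right ((Commute.refl y).pow_right 2)

end IsHWPair

/-- Three elements of which any two satisfy the Hantzsche–Wendt relations. In contrast to
`x`, `y`, `x * y`, whose asymmetry it forgets, this notion is invariant under permutations. -/
structure IsHWTriple (x y z : G) : Prop where
  left_mid : IsHWPair x y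
  left_right : IsHWPair x z
  mid_right : IsHWPair y z

theorem IsHWPair.isHWTriple {x y : G} (h : IsHWPair x y) : IsHWTriple x y (x * y) :=
  ⟨h, h.mul_right, h.mul_left⟩

/-- The subgroup generated by the squares of three elements. For the three screw motions
`x`, `y`, `x * y` of the Hantzsche–Wendt group it is the translation lattice. -/
def squareSubgroup (x y z : G) : Subgroup G :=
  Subgroup.zpowers (x ^ 2) ⊔ Subgroup.zpowers (y ^ 2) ⊔ Subgroup.zpowers (z ^ 2)

theorem squareSubgroup_rotate (x y z : G) : squareSubgroup y z x = squareSubgroup x y z := by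
  rw [squareSubgroup, squareSubgroup, sup_comm, sup_assoc]

theorem squareSubgroup_swap_right (x y z : G) : squareSubgroup x z y = squareSubgroup x y z :=
  sup_right_comm _ _ _

theorem squareSubgroup_le_ker {V : Type*} [Group V] [IsKleinFour V] (φ : G →* V) (x y z : G) :
    squareSubgroup x y z ≤ φ.ker := by
  have hsq (g : G) : g ^ 2 ∈ φ.ker := by
    rw [MonoidHom.mem_ker, map_pow, pow_two, IsKleinFour.mul_self]
  exact sup_le (sup_le (Subgroup.zpowers_le.2 (hsq x)) (Subgroup.zpowers_le.2 (hsq y)))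
    (Subgroup.zpowers_le.2 (hsq z))

namespace IsHWTriple

variable {x y z m n : G}

theorem rotate (h : IsHWTriple x y z) : IsHWTriple y z x :=
  ⟨h.mid_right, h.left_mid.symm, h.left_right.symm⟩

theorem swap_right (h : IsHWTriple x y z) : IsHWTriple x z y :=
  ⟨h.left_right, h.left_mid, h.mid_right.symm⟩

theorem commute_sq_of_mem (h : IsHWTriple x y z) (hm : m ∈ squareSubgroup x y z) :
    Commute m (x ^ 2) := by
  have hle : squareSubgroup x y z ≤ Subgroup.centralizer (Subgroup.zpowers (x ^ 2)) :=
    sup_le (sup_le (zpowers_le_centralizer_zpowers (Commute.refl (x ^ 2)))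
      (zpowers_le_centralizer_zpowers h.left_mid.commute_sq.symm))
      (zpowers_le_centralizer_zpowers h.left_right.commute_sq.symm)
  exact (Subgroup.mem_centralizer_iff.1 (hle hm) _ (Subgroup.mem_zpowers _)).symm

theorem mul_sq_mem_zpowers (h : IsHWTriple x y z) (hm : m ∈ squareSubgroup x y z) :
    (x * m) ^ 2 ∈ Subgroup.zpowers (x ^ 2) := by
  rw [← squareSubgroup_rotate] at hm
  obtain ⟨n, hn, _, ⟨k, rfl⟩, rfl⟩ := exists_mul_eq_of_mem_sup_of_le_centralizer
    (sup_le (zpowers_le_centralizer_zpowers h.left_mid.commute_sq.symm)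
      (zpowers_le_centralizer_zpowers h.left_right.commute_sq.symm)) hm
  have hxn : Inverts x n := h.left_mid.inverts_sq_right.of_mem_zpowers_sup
    h.left_right.inverts_sq_right h.mid_right.commute_sq hn
  have hcomm : Commute (x * n) (x ^ 2) := by
    refine (Commute.self_pow x 2).mul_left (h.commute_sq_of_mem ?_)
    rw [← squareSubgroup_rotate]
    exact Subgroup.mem_sup_left hn
  rw [← mul_assoc, (hcomm.zpow_right k).mul_pow, hxn.mul_sq]
  exact mul_mem (Subgroup.mem_zpowers _) (pow_mem (Subgroup.zpow_mem_zpowers _ k) 2)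

theorem isHWPair_mul (h : IsHWTriple x y z) (hm : m ∈ squareSubgroup x y z)
    (hn : n ∈ squareSubgroup x y z) : IsHWPair (x * m) (y * n) := by
  have hmy : Commute m (y ^ 2) := h.rotate.commute_sq_of_mem (by rwa [squareSubgroup_rotate])
  have hnx : Commute n (x ^ 2) := h.commute_sq_of_mem hn
  have hyn : (y * n) ^ 2 ∈ Subgroup.zpowers (y ^ 2) :=
    h.rotate.mul_sq_mem_zpowers (by rwa [squareSubgroup_rotate])
  exact ⟨(h.left_mid.inverts_sq_right.mul_right hmy).of_mem_zpowers hyn,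
    (h.left_mid.inverts_sq_left.mul_right hnx).of_mem_zpowers (h.mul_sq_mem_zpowers hm)⟩

theorem isHWPair_mul_of_ne (h : IsHWTriple x y z) {u v : G} (hu : u ∈ ({x, y, z} : Set G))
    (hv : v ∈ ({x, y, z} : Set G)) (huv : u ≠ v) (hm : m ∈ squareSubgroup x y z)
    (hn : n ∈ squareSubgroup x y z) : IsHWPair (u * m) (v * n) := by
  have hxz {m n : G} (hm : m ∈ squareSubgroup x y z) (hn : n ∈ squareSubgroup x y z) :
      IsHWPair (x * m) (z * n) := by
    rw [← squareSubgroup_swap_right] at hm hn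
    exact h.swap_right.isHWPair_mul hm hn
  have hyz {m n : G} (hm : m ∈ squareSubgroup x y z) (hn : n ∈ squareSubgroup x y z) :
      IsHWPair (y * m) (z * n) := by
    rw [← squareSubgroup_rotate] at hm hn
    exact h.rotate.isHWPair_mul hm hn
  rcases hu with rfl | rfl | rfl <;> rcases hv with rfl | rfl | rfl
  · exact absurd rfl huv
  · exact h.isHWPair_mul hm hn
  · exact hxz hm hn
  · exact (h.isHWPair_mul hn hm).symm
  · exact absurd rfl huv
  · exact hyz hm hn
  · exact (hxz hn hm).symm
  · exact (hyz hn hm).symm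
  · exact absurd rfl huv

end IsHWTriple

namespace IsHWPair

variable {x y : G}

theorem squareSubgroup_normal (h : IsHWPair x y) (hgen : Subgroup.closure {x, y} = ⊤) :
    (squareSubgroup x y (x * y)).Normal := by
  have hself (g : G) : g ∈ Subgroup.normalizer (Subgroup.zpowers (g ^ 2) : Set G) :=
    Subgroup.centralizer_le_normalizer _
      (zpowers_le_centralizer_zpowers (Commute.self_pow g 2) (Subgroup.mem_zpowers g))
  have hx : (Subgroup.zpowers (x ^ 2)).Normal := normal_of_closure_eq_top hgen
    (Set.pair_subset (hself x) h.inverts_sq_left.mem_normalizer_zpowers)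
  have hy : (Subgroup.zpowers (y ^ 2)).Normal := normal_of_closure_eq_top hgen
    (Set.pair_subset h.inverts_sq_right.mem_normalizer_zpowers (hself y))
  have hxy : (Subgroup.zpowers ((x * y) ^ 2)).Normal := normal_of_closure_eq_top hgen
    (Set.pair_subset h.mul_right.inverts_sq_right.mem_normalizer_zpowers
      h.mul_left.inverts_sq_right.mem_normalizer_zpowers)
  unfold squareSubgroup
  infer_instance

theorem exists_mul_mem_squareSubgroup_eq (h : IsHWPair x y)
    (hgen : Subgroup.closure {x, y} = ⊤) (g : G) :
    ∃ u ∈ ({1, x, y, x * y} : Set G), ∃ m ∈ squareSubgroup x y (x * y), u * m = g := by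
  have := h.squareSubgroup_normal hgen
  let π := QuotientGroup.mk' (squareSubgroup x y (x * y))
  have hπ : Subgroup.closure {π x, π y} = ⊤ := by
    rw [← Set.image_pair, ← MonoidHom.map_closure, hgen,
      Subgroup.map_top_of_surjective π (QuotientGroup.mk'_surjective _)]
  have hsq {u : G} (hu : u ^ 2 ∈ squareSubgroup x y (x * y)) : π u ^ 2 = 1 := by
    rwa [← map_pow, ← MonoidHom.mem_ker, QuotientGroup.ker_mk']
  have hcoset {u : G} (hu : π g = π u) : ∃ m ∈ squareSubgroup x y (x * y), u * m = g :=
    ⟨u⁻¹ * g, QuotientGroup.eq.1 hu.symm, mul_inv_cancel_left u g⟩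
  have hcases : π g = π 1 ∨ π g = π x ∨ π g = π y ∨ π g = π (x * y) := by
    rw [map_one, map_mul]
    refine eq_of_closure_pair_eq_top_of_sq_eq_one hπ (hsq ?_) (hsq ?_) ?_ (π g)
    · exact Subgroup.mem_sup_left (Subgroup.mem_sup_left (Subgroup.mem_zpowers _))
    · exact Subgroup.mem_sup_left (Subgroup.mem_sup_right (Subgroup.mem_zpowers _))
    · rw [← map_mul]
      exact hsq (Subgroup.mem_sup_right (Subgroup.mem_zpowers _))
  rcases hcases with hg | hg | hg | hg
  · exact ⟨1, by simp, hcoset hg⟩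
  · exact ⟨x, by simp, hcoset hg⟩
  · exact ⟨y, by simp, hcoset hg⟩
  · exact ⟨x * y, by simp, hcoset hg⟩

theorem of_closure_pair_eq_top (h : IsHWPair x y) (hgen : Subgroup.closure {x, y} = ⊤)
    {V : Type*} [Group V] [IsKleinFour V] {φ : G →* V} (hφ : Function.Surjective φ) {s t : G}
    (hst : Subgroup.closure {s, t} = ⊤) : IsHWPair s t := by
  obtain ⟨u, hu, m, hm, rfl⟩ := h.exists_mul_mem_squareSubgroup_eq hgen s
  obtain ⟨v, hv, n, hn, rfl⟩ := h.exists_mul_mem_squareSubgroup_eq hgen t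
  have hφst : Subgroup.closure {φ u, φ v} = ⊤ := by
    have hφm : φ m = 1 := squareSubgroup_le_ker φ x y (x * y) hm
    have hφn : φ n = 1 := squareSubgroup_le_ker φ x y (x * y) hn
    have hmap := congrArg (Subgroup.map φ) hst
    rwa [MonoidHom.map_closure, Set.image_pair, map_mul, map_mul, hφm, hφn, mul_one, mul_one,
      Subgroup.map_top_of_surjective φ hφ] at hmap
  obtain ⟨hu1, hv1, huv⟩ :=
    ne_of_closure_pair_eq_top_of_not_isCyclic IsKleinFour.not_isCyclic hφst
  have hu' : u ∈ ({x, y, x * y} : Set G) :=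
    hu.resolve_left fun hu => hu1 (by rw [hu, map_one])
  have hv' : v ∈ ({x, y, x * y} : Set G) :=
    hv.resolve_left fun hv => hv1 (by rw [hv, map_one])
  exact h.isHWTriple.isHWPair_mul_of_ne hu' hv' (ne_of_apply_ne φ huv) hm hn

end IsHWPair

theorem hw_generators_relations_general {V : Type*} [Group V] [IsKleinFour V] {x y : G}
    (hxy : IsHWPair x y) (hgen_xy : Subgroup.closure {x, y} = ⊤) {φ : G →* V}
    (hφ : Function.Surjective φ) {α β : G} (hgen : Subgroup.closure {α, β} = ⊤) {γ a b c : G}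
    (hγ : γ = α * β) (ha : a = α ^ 2) (hb : b = β ^ 2) (hc : c = γ ^ 2) :
    (a * b = b * a ∧ a * c = c * a ∧ b * c = c * b) ∧
    β⁻¹ * a * β = a⁻¹ ∧ γ⁻¹ * a * γ = a⁻¹ ∧
    α⁻¹ * b * α = b⁻¹ ∧ γ⁻¹ * b * γ = b⁻¹ ∧
    α⁻¹ * c * α = c⁻¹ ∧ β⁻¹ * c * β = c⁻¹ := by
  subst hγ ha hb hc
  have hαβ : IsHWPair α β := hxy.of_closure_pair_eq_top hgen_xy hφ hgen
  have hαγ : IsHWPair α (α * β) := hαβ.mul_right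
  have hβγ : IsHWPair β (α * β) := hαβ.mul_left
  exact ⟨⟨hαβ.commute_sq, hαγ.commute_sq, hβγ.commute_sq⟩,
    hαβ.inverts_sq_left.conj_eq_inv, hαγ.inverts_sq_left.conj_eq_inv,
    hαβ.inverts_sq_right.conj_eq_inv, hβγ.inverts_sq_left.conj_eq_inv,
    hαγ.inverts_sq_right.conj_eq_inv, hβγ.inverts_sq_right.conj_eq_inv⟩

end Group

theorem isHWPair_hwX_hwY : IsHWPair hwX hwY where
  inverts_sq_right :=
    .of_conj_mul_eq_one (PresentedGroup.one_of_mem (rels := hwRels) (Or.inl rfl))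
  inverts_sq_left :=
    .of_conj_mul_eq_one (PresentedGroup.one_of_mem (rels := hwRels) (Or.inr rfl))

theorem closure_hwX_hwY_eq_top : Subgroup.closure {hwX, hwY} = ⊤ := by
  have hrange : Set.range (PresentedGroup.of : Fin 2 → HantzscheWendtGroup) = {hwX, hwY} := by
    ext g
    simp only [Set.mem_range, Fin.exists_fin_two, Set.mem_insert_iff, Set.mem_singleton_iff,
      hwX, hwY, eq_comm]
  rw [← hrange, PresentedGroup.closure_range_of]

/-- The holonomy map of the Hantzsche–Wendt group: the quotient by the translation lattice,
identified with the Klein four-group `(ℤ/2)²` by sending `x` and `y` to the standard basis. -/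
def hwHolonomy : HantzscheWendtGroup →* Multiplicative (ZMod 2 × ZMod 2) :=
  PresentedGroup.toGroup (f := ![.ofAdd (1, 0), .ofAdd (0, 1)]) <| by
    rintro r (rfl | rfl) <;>
      simp only [map_mul, map_inv, map_pow, FreeGroup.lift_apply_of, Matrix.cons_val_zero,
        Matrix.cons_val_one] <;> decide

theorem hwHolonomy_surjective : Function.Surjective hwHolonomy := by
  have hx : hwHolonomy hwX = .ofAdd (1, 0) := PresentedGroup.toGroup.of _
  have hy : hwHolonomy hwY = .ofAdd (0, 1) := PresentedGroup.toGroup.of _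
  intro v
  refine ⟨hwX ^ v.toAdd.1.val * hwY ^ v.toAdd.2.val, ?_⟩
  rw [map_mul, map_pow, map_pow, hx, hy]
  revert v
  decide

/-- For any generating pair `α, β` of the Hantzsche–Wendt group, setting `γ = αβ`,
`a = α²`, `b = β²`, `c = γ²`, the elements `a, b, c` pairwise commute and are inverted
by conjugation by the remaining two of `α, β, γ`. -/
theorem hw_generators_relations (α β : HantzscheWendtGroup)
    (hgen : Subgroup.closure ({α, β} : Set HantzscheWendtGroup) = ⊤)
    (γ a b c : HantzscheWendtGroup)
    (hγ : γ = α * β) (ha : a = α ^ 2) (hb : b = β ^ 2) (hc : c = γ ^ 2) :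
    (a * b = b * a ∧ a * c = c * a ∧ b * c = c * b) ∧
    β⁻¹ * a * β = a⁻¹ ∧ γ⁻¹ * a * γ = a⁻¹ ∧
    α⁻¹ * b * α = b⁻¹ ∧ γ⁻¹ * b * γ = b⁻¹ ∧
    α⁻¹ * c * α = c⁻¹ ∧ β⁻¹ * c * β = c⁻¹ := by
  exact hw_generators_relations_general isHWPair_hwX_hwY closure_hwX_hwY_eq_top
    hwHolonomy_surjective hgen hγ ha hb hc
end

section
/- The center of the Hantzsche–Wendt group Δ_P is trivial. -/
/-!
The squares `x²`, `y²`, `(xy)²` are centralized or inverted by each generator, so they generate a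
normal subgroup `N` whose cosets are represented by `1`, `x`, `y`, `xy`. Moreover `x²` and `y²`
commute with `N`. Each of `x`, `y`, `xy` inverts `x²` or `y²`, so a central element in a
nontrivial coset would make `x⁴` or `y⁴` trivial. A central element `x²ⁱ y²ʲ (xy)²ᵏ` of `N` equals
its conjugates `x²ⁱ y⁻²ʲ (xy)⁻²ᵏ` by `x` and `x⁻²ⁱ y²ʲ (xy)⁻²ᵏ` by `y`, so `i = j = k = 0` if such
expressions are unique. Uniqueness, and with it `x⁴ ≠ 1 ≠ y⁴`, is visible in the action on `ℤ³` by
screw motions, where the three squares are translations along the coordinate axes.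
-/

open Subgroup

section

variable {G : Type*} [Group G]

theorem semiconjBy_inv_iff {g a : G} : SemiconjBy g a a⁻¹ ↔ g⁻¹ * a * g * a = 1 := by
  rw [SemiconjBy, eq_inv_mul_iff_mul_eq, mul_assoc, mul_assoc, inv_mul_eq_one, eq_comm]

theorem sq_eq_one_of_commute_of_semiconjBy_inv {g a : G} (hcomm : Commute g a)
    (hinv : SemiconjBy g a a⁻¹) : a ^ 2 = 1 := by
  have ha : a = a⁻¹ := mul_right_cancel (hcomm.eq.symm.trans hinv.eq)
  rw [pow_two, ← eq_inv_iff_mul_eq_one, ← ha]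

theorem normal_zpowers_of_closure_eq_top {s : Set G} (hs : closure s = ⊤) {a : G}
    (h : ∀ g ∈ s, Commute g a ∨ SemiconjBy g a a⁻¹) : (zpowers a).Normal := by
  rw [← normalizer_eq_top_iff, eq_top_iff, ← hs, closure_le]
  intro g hg
  rw [SetLike.mem_coe, mem_normalizer_iff_map_conj_eq, MonoidHom.map_zpowers]
  rcases h g hg with hcomm | hinv
  · simp [hcomm.eq]
  · simp [hinv.eq]

theorem closure_pair_eq_zpowers_sup (u v : G) : closure {u, v} = zpowers u ⊔ zpowers v := by
  rw [Set.insert_eq, Subgroup.closure_union, zpowers_eq_closure, zpowers_eq_closure]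

theorem zpow_eq_one_or_self_of_sq_eq_one {u : G} (hu : u ^ 2 = 1) (m : ℤ) :
    u ^ m = 1 ∨ u ^ m = u := by
  obtain ⟨k, rfl | rfl⟩ := m.even_or_odd'
  · simp [zpow_mul, zpow_ofNat, hu]
  · simp [zpow_add, zpow_mul, zpow_ofNat, hu]

theorem mem_of_closure_pair_eq_top_of_sq_eq_one {u v : G} (huv : closure {u, v} = ⊤)
    (hu : u ^ 2 = 1) (hv : v ^ 2 = 1) (hmul : (u * v) ^ 2 = 1) (g : G) :
    g ∈ ({1, u, v, u * v} : Set G) := by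
  have hcomm : Commute u v := by
    rw [pow_two, mul_eq_one_iff_eq_inv] at hu hv hmul
    rw [commute_iff_eq, hmul, mul_inv_rev, ← hu, ← hv]
  have : (zpowers u).Normal := normal_zpowers_of_closure_eq_top huv <| by
    rintro g (rfl | rfl)
    exacts [.inl (.refl _), .inl hcomm.symm]
  have hg : g ∈ zpowers u ⊔ zpowers v := by
    rw [← closure_pair_eq_zpowers_sup, huv]
    exact mem_top g
  obtain ⟨_, ⟨m, rfl⟩, _, ⟨n, rfl⟩, rfl⟩ := mem_sup_of_normal_left.mp hg
  rcases zpow_eq_one_or_self_of_sq_eq_one hu m with hm | hm <;>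
    rcases zpow_eq_one_or_self_of_sq_eq_one hv n with hn | hn <;>
    simp [hm, hn]

end

/-- Elements `x`, `y` of a group satisfying the defining relations of the Hantzsche–Wendt group,
written as: `x` inverts `y²` and `y` inverts `x²` under conjugation. -/
structure IsHantzscheWendtPair {G : Type*} [Group G] (x y : G) : Prop where
  semiconjBy_left : SemiconjBy x (y ^ 2) (y ^ 2)⁻¹
  semiconjBy_right : SemiconjBy y (x ^ 2) (x ^ 2)⁻¹

/-- The element `x²ⁱ y²ʲ (xy)²ᵏ` with exponent vector `(i, j, k)`. In the Hantzsche–Wendt group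
these are the translations of the crystallographic action. -/
def hwTranslation {G : Type*} [Group G] (x y : G) (n : ℤ × ℤ × ℤ) : G :=
  (x ^ 2) ^ n.1 * (y ^ 2) ^ n.2.1 * ((x * y) ^ 2) ^ n.2.2

theorem map_hwTranslation {G H : Type*} [Group G] [Group H] (f : G →* H) (x y : G)
    (n : ℤ × ℤ × ℤ) : f (hwTranslation x y n) = hwTranslation (f x) (f y) n := by
  simp only [hwTranslation, map_mul, map_zpow, map_pow]

theorem left_sq_sq_ne_one_of_injective_hwTranslation {G : Type*} [Group G] {x y : G}
    (hinj : Function.Injective (hwTranslation x y)) : (x ^ 2) ^ 2 ≠ 1 := by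
  intro hx
  have h2 : hwTranslation x y (2, 0, 0) = hwTranslation x y (0, 0, 0) := by
    simp [hwTranslation, zpow_ofNat, hx]
  simpa using hinj h2

theorem right_sq_sq_ne_one_of_injective_hwTranslation {G : Type*} [Group G] {x y : G}
    (hinj : Function.Injective (hwTranslation x y)) : (y ^ 2) ^ 2 ≠ 1 := by
  intro hy
  have h2 : hwTranslation x y (0, 2, 0) = hwTranslation x y (0, 0, 0) := by
    simp [hwTranslation, zpow_ofNat, hy]
  simpa using hinj h2

namespace IsHantzscheWendtPair

variable {G : Type*} [Group G] {x y : G}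

theorem semiconjBy_left_mul_sq (h : IsHantzscheWendtPair x y) :
    SemiconjBy x ((x * y) ^ 2) ((x * y) ^ 2)⁻¹ := by
  have hx : x * y ^ 2 = (y ^ 2)⁻¹ * x := h.semiconjBy_left.eq
  have hy : y⁻¹ * x ^ 2 * y = (x ^ 2)⁻¹ :=
    eq_inv_of_mul_eq_one_left (semiconjBy_inv_iff.mp h.semiconjBy_right)
  have hxy : x * (x * y) ^ 2 * x⁻¹ * (x * y) ^ 2 = 1 :=
    calc x * (x * y) ^ 2 * x⁻¹ * (x * y) ^ 2
        = x ^ 2 * y * (x * y ^ 2) * x * y := by simp only [pow_two]; group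
      _ = x ^ 2 * (y⁻¹ * x ^ 2 * y) := by rw [hx]; simp only [pow_two]; group
      _ = 1 := by rw [hy, mul_inv_cancel]
  exact mul_inv_eq_iff_eq_mul.mp (eq_inv_of_mul_eq_one_left hxy)

theorem semiconjBy_right_mul_sq (h : IsHantzscheWendtPair x y) :
    SemiconjBy y ((x * y) ^ 2) ((x * y) ^ 2)⁻¹ := by
  have hx : SemiconjBy x⁻¹ ((x * y) ^ 2) ((x * y) ^ 2)⁻¹ := by
    simpa using h.semiconjBy_left_mul_sq.inv_right.inv_symm_left
  have hxy : Commute (x * y) ((x * y) ^ 2) := Commute.self_pow _ 2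
  simpa using hx.mul_left hxy

theorem semiconjBy_left_hwTranslation (h : IsHantzscheWendtPair x y) (i j k : ℤ) :
    SemiconjBy x (hwTranslation x y (i, j, k)) (hwTranslation x y (i, -j, -k)) := by
  have hx : SemiconjBy x (x ^ 2) (x ^ 2) := Commute.self_pow x 2
  have hsemi := ((hx.zpow_right i).mul_right (h.semiconjBy_left.zpow_right j)).mul_right
    (h.semiconjBy_left_mul_sq.zpow_right k)
  rwa [inv_zpow', inv_zpow'] at hsemi

theorem semiconjBy_right_hwTranslation (h : IsHantzscheWendtPair x y) (i j k : ℤ) :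
    SemiconjBy y (hwTranslation x y (i, j, k)) (hwTranslation x y (-i, j, -k)) := by
  have hy : SemiconjBy y (y ^ 2) (y ^ 2) := Commute.self_pow y 2
  have hsemi := ((h.semiconjBy_right.zpow_right i).mul_right (hy.zpow_right j)).mul_right
    (h.semiconjBy_right_mul_sq.zpow_right k)
  rwa [inv_zpow', inv_zpow'] at hsemi

theorem commute_left_sq_hwTranslation (h : IsHantzscheWendtPair x y) (n : ℤ × ℤ × ℤ) :
    Commute (x ^ 2) (hwTranslation x y n) := by
  obtain ⟨i, j, k⟩ := n
  have hsq := (h.semiconjBy_left_hwTranslation i (-j) (-k)).mul_left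
    (h.semiconjBy_left_hwTranslation i j k)
  rwa [neg_neg, neg_neg, ← pow_two] at hsq

theorem commute_right_sq_hwTranslation (h : IsHantzscheWendtPair x y) (n : ℤ × ℤ × ℤ) :
    Commute (y ^ 2) (hwTranslation x y n) := by
  obtain ⟨i, j, k⟩ := n
  have hsq := (h.semiconjBy_right_hwTranslation (-i) j (-k)).mul_left
    (h.semiconjBy_right_hwTranslation i j k)
  rwa [neg_neg, neg_neg, ← pow_two] at hsq

theorem normal_zpowers_left_sq (h : IsHantzscheWendtPair x y) (hgen : closure {x, y} = ⊤) :
    (zpowers (x ^ 2)).Normal := by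
  refine normal_zpowers_of_closure_eq_top hgen ?_
  rintro g (rfl | rfl)
  exacts [.inl (Commute.self_pow _ 2), .inr h.semiconjBy_right]

theorem normal_zpowers_right_sq (h : IsHantzscheWendtPair x y) (hgen : closure {x, y} = ⊤) :
    (zpowers (y ^ 2)).Normal := by
  refine normal_zpowers_of_closure_eq_top hgen ?_
  rintro g (rfl | rfl)
  exacts [.inr h.semiconjBy_left, .inl (Commute.self_pow _ 2)]

theorem normal_zpowers_mul_sq (h : IsHantzscheWendtPair x y) (hgen : closure {x, y} = ⊤) :
    (zpowers ((x * y) ^ 2)).Normal := by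
  refine normal_zpowers_of_closure_eq_top hgen ?_
  rintro g (rfl | rfl)
  exacts [.inr h.semiconjBy_left_mul_sq, .inr h.semiconjBy_right_mul_sq]

theorem exists_hwTranslation_mul_eq (h : IsHantzscheWendtPair x y) (hgen : closure {x, y} = ⊤)
    (g : G) : ∃ n, ∃ w ∈ ({1, x, y, x * y} : Set G), hwTranslation x y n * w = g := by
  have := h.normal_zpowers_left_sq hgen
  have := h.normal_zpowers_right_sq hgen
  have := h.normal_zpowers_mul_sq hgen
  let N := zpowers (x ^ 2) ⊔ zpowers (y ^ 2) ⊔ zpowers ((x * y) ^ 2)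
  let π := QuotientGroup.mk' N
  have π_sq {a : G} (ha : zpowers (a ^ 2) ≤ N) : π a ^ 2 = 1 :=
    (QuotientGroup.eq_one_iff _).mpr (ha (mem_zpowers _))
  have hx : π x ^ 2 = 1 := π_sq (le_sup_left.trans le_sup_left)
  have hy : π y ^ 2 = 1 := π_sq (le_sup_right.trans le_sup_left)
  have hxy : (π x * π y) ^ 2 = 1 := by
    rw [← map_mul]
    exact π_sq le_sup_right
  have hπ : closure {π x, π y} = ⊤ := by
    rw [← Set.image_pair, ← MonoidHom.map_closure, hgen,
      map_top_of_surjective π (QuotientGroup.mk'_surjective N)]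
  obtain ⟨w, hw, hgw⟩ : ∃ w ∈ ({1, x, y, x * y} : Set G), π g = π w := by
    simpa using mem_of_closure_pair_eq_top_of_sq_eq_one hπ hx hy hxy (π g)
  have hN : g / w ∈ N := QuotientGroup.eq_iff_div_mem.mp hgw
  obtain ⟨_, hab, _, ⟨k, rfl⟩, hg⟩ := mem_sup_of_normal_left.mp hN
  obtain ⟨_, ⟨i, rfl⟩, _, ⟨j, rfl⟩, rfl⟩ := mem_sup_of_normal_left.mp hab
  exact ⟨(i, j, k), w, hw, eq_div_iff_mul_eq'.mp hg⟩

theorem eq_one_of_commute_sq (h : IsHantzscheWendtPair x y) (hx : (x ^ 2) ^ 2 ≠ 1)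
    (hy : (y ^ 2) ^ 2 ≠ 1) {w : G} (hw : w ∈ ({1, x, y, x * y} : Set G))
    (hwx : Commute w (x ^ 2)) (hwy : Commute w (y ^ 2)) : w = 1 := by
  rcases hw with rfl | rfl | rfl | rfl
  · rfl
  · exact absurd (sq_eq_one_of_commute_of_semiconjBy_inv hwy h.semiconjBy_left) hy
  · exact absurd (sq_eq_one_of_commute_of_semiconjBy_inv hwx h.semiconjBy_right) hx
  · have hinv : SemiconjBy (x * y) (x ^ 2) (x ^ 2)⁻¹ :=
      (Commute.self_pow x 2).inv_right.semiconjBy.mul_left h.semiconjBy_right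
    exact absurd (sq_eq_one_of_commute_of_semiconjBy_inv hwx hinv) hx

theorem eq_zero_of_commute_hwTranslation (h : IsHantzscheWendtPair x y)
    (hinj : Function.Injective (hwTranslation x y)) {n : ℤ × ℤ × ℤ}
    (hx : Commute x (hwTranslation x y n)) (hy : Commute y (hwTranslation x y n)) : n = 0 := by
  obtain ⟨i, j, k⟩ := n
  have hxn : (i, j, k) = (i, -j, -k) :=
    hinj (mul_right_cancel (hx.eq.symm.trans (h.semiconjBy_left_hwTranslation i j k).eq))
  have hyn : (i, j, k) = (-i, j, -k) :=
    hinj (mul_right_cancel (hy.eq.symm.trans (h.semiconjBy_right_hwTranslation i j k).eq))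
  simp only [Prod.mk.injEq, Prod.mk_eq_zero] at hxn hyn ⊢
  omega

theorem center_eq_bot (h : IsHantzscheWendtPair x y) (hgen : closure {x, y} = ⊤)
    (hinj : Function.Injective (hwTranslation x y)) : center G = ⊥ := by
  rw [eq_bot_iff]
  intro g hg
  obtain ⟨n, w, hw, rfl⟩ := h.exists_hwTranslation_mul_eq hgen g
  have hcentral (a : G) : Commute a (hwTranslation x y n * w) := mem_center_iff.mp hg a
  have commute_w {a : G} (ha : Commute a (hwTranslation x y n)) : Commute w a := by
    simpa using (ha.inv_right.mul_right (hcentral a)).symm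
  obtain rfl : w = 1 :=
    h.eq_one_of_commute_sq (left_sq_sq_ne_one_of_injective_hwTranslation hinj)
      (right_sq_sq_ne_one_of_injective_hwTranslation hinj) hw
      (commute_w (h.commute_left_sq_hwTranslation n))
      (commute_w (h.commute_right_sq_hwTranslation n))
  simp only [mul_one] at hcentral
  obtain rfl : n = 0 := h.eq_zero_of_commute_hwTranslation hinj (hcentral x) (hcentral y)
  simp [hwTranslation]

theorem lift_eq_one (h : IsHantzscheWendtPair x y) :
    ∀ r ∈ hwRels, FreeGroup.lift ![x, y] r = 1 := by
  rintro r (rfl | rfl)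
  · simpa using semiconjBy_inv_iff.mp h.semiconjBy_left
  · simpa using semiconjBy_inv_iff.mp h.semiconjBy_right

/-- The homomorphism from the Hantzsche–Wendt group sending the generators to a given pair that
satisfies the defining relations. -/
def lift (h : IsHantzscheWendtPair x y) : HantzscheWendtGroup →* G :=
  PresentedGroup.toGroup h.lift_eq_one

theorem lift_hwX (h : IsHantzscheWendtPair x y) : h.lift hwX = x :=
  PresentedGroup.toGroup.of h.lift_eq_one

theorem lift_hwY (h : IsHantzscheWendtPair x y) : h.lift hwY = y :=
  PresentedGroup.toGroup.of h.lift_eq_one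

end IsHantzscheWendtPair

/-- The screw motion `(a, b, c) ↦ (a + 1, 1 - b, -c)` of `ℤ³`, by which `x` acts. -/
def hwScrewX : Equiv.Perm (ℤ × ℤ × ℤ) :=
  (Equiv.addRight 1).prodCongr ((Equiv.subLeft 1).prodCongr (Equiv.neg ℤ))

/-- The screw motion `(a, b, c) ↦ (-a, b + 1, 1 - c)` of `ℤ³`, by which `y` acts. -/
def hwScrewY : Equiv.Perm (ℤ × ℤ × ℤ) :=
  (Equiv.neg ℤ).prodCongr ((Equiv.addRight 1).prodCongr (Equiv.subLeft 1))

theorem hwScrewX_apply (a b c : ℤ) : hwScrewX (a, b, c) = (a + 1, 1 - b, -c) := rfl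

theorem hwScrewY_apply (a b c : ℤ) : hwScrewY (a, b, c) = (-a, b + 1, 1 - c) := rfl

theorem hwScrewX_sq : hwScrewX ^ 2 = Equiv.addRight (2, 0, 0) := by
  ext1 ⟨a, b, c⟩
  simp [pow_two, hwScrewX_apply, add_assoc]

theorem hwScrewY_sq : hwScrewY ^ 2 = Equiv.addRight (0, 2, 0) := by
  ext1 ⟨a, b, c⟩
  simp [pow_two, hwScrewY_apply, add_assoc]

theorem hwScrewX_mul_hwScrewY_sq : (hwScrewX * hwScrewY) ^ 2 = Equiv.addRight (0, 0, -2) := by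
  ext1 ⟨a, b, c⟩
  simp only [pow_two, Equiv.Perm.mul_apply, Equiv.coe_addRight, hwScrewX_apply, hwScrewY_apply,
    Prod.mk_add_mk, Prod.mk.injEq]
  omega

theorem isHantzscheWendtPair_hwScrew : IsHantzscheWendtPair hwScrewX hwScrewY where
  semiconjBy_left := by
    rw [hwScrewY_sq, SemiconjBy]
    ext1 ⟨a, b, c⟩
    simp only [Equiv.Perm.mul_apply, Equiv.coe_addRight, hwScrewX_apply, Prod.mk_add_mk,
      Prod.neg_mk, Equiv.neg_addRight, Prod.mk.injEq]
    omega
  semiconjBy_right := by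
    rw [hwScrewX_sq, SemiconjBy]
    ext1 ⟨a, b, c⟩
    simp only [Equiv.Perm.mul_apply, Equiv.coe_addRight, hwScrewY_apply, Prod.mk_add_mk,
      Prod.neg_mk, Equiv.neg_addRight, Prod.mk.injEq]
    omega

theorem hwTranslation_hwScrew_apply_zero (i j k : ℤ) :
    hwTranslation hwScrewX hwScrewY (i, j, k) 0 = (2 * i, 2 * j, -2 * k) := by
  rw [hwTranslation, hwScrewX_sq, hwScrewY_sq, hwScrewX_mul_hwScrewY_sq]
  simp [mul_comm]

theorem injective_hwTranslation_hwScrew :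
    Function.Injective (hwTranslation hwScrewX hwScrewY) := by
  rintro ⟨i, j, k⟩ ⟨i', j', k'⟩ heq
  have hzero := DFunLike.congr_fun heq 0
  simp only [hwTranslation_hwScrew_apply_zero, Prod.mk.injEq] at hzero ⊢
  omega

theorem isHantzscheWendtPair_hwX_hwY : IsHantzscheWendtPair hwX hwY where
  semiconjBy_left :=
    semiconjBy_inv_iff.mpr (PresentedGroup.one_of_mem (rels := hwRels) (Or.inl rfl))
  semiconjBy_right :=
    semiconjBy_inv_iff.mpr (PresentedGroup.one_of_mem (rels := hwRels) (Or.inr rfl))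

theorem closure_hwX_hwY : closure {hwX, hwY} = ⊤ := by
  have hrange : Set.range (PresentedGroup.of (rels := hwRels)) = {hwX, hwY} := by
    ext g
    simp [Fin.exists_fin_two, hwX, hwY, eq_comm]
  rw [← hrange, PresentedGroup.closure_range_of]

theorem injective_hwTranslation_hwX_hwY : Function.Injective (hwTranslation hwX hwY) := by
  let ρ := isHantzscheWendtPair_hwScrew.lift
  refine Function.Injective.of_comp (f := ρ) ?_
  have hρ : ρ ∘ hwTranslation hwX hwY = hwTranslation hwScrewX hwScrewY := by
    ext1 n
    rw [Function.comp_apply, map_hwTranslation, isHantzscheWendtPair_hwScrew.lift_hwX,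
      isHantzscheWendtPair_hwScrew.lift_hwY]
  rw [hρ]
  exact injective_hwTranslation_hwScrew

/-- The center of the Hantzsche–Wendt group is trivial. -/
theorem hw_center_trivial : Subgroup.center HantzscheWendtGroup = ⊥ := by
  exact isHantzscheWendtPair_hwX_hwY.center_eq_bot closure_hwX_hwY injective_hwTranslation_hwX_hwY
end

section
/- The Hantzsche–Wendt group Δ_P is not diffuse. -/
/-- A group `G` is diffuse if every finite nonempty subset `A` of `G` has an extremal point,
i.e. an element `a ∈ A` such that for every `g ≠ 1`, either `g*a ∉ A` or `g⁻¹*a ∉ A`. -/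
def IsDiffuse (G : Type*) [Group G] : Prop :=
  ∀ A : Finset G, A.Nonempty →
    ∃ a ∈ A, ∀ g : G, g ≠ 1 → g * a ∉ A ∨ g⁻¹ * a ∉ A

variable {G : Type*} [Group G]

/-- The notion of extremal point in the definition of a diffuse group, for arbitrary sets `A`
rather than finsets, so that it needs no decidable equality on `G`. -/
def IsExtremalPoint (A : Set G) (a : G) : Prop :=
  a ∈ A ∧ ∀ g : G, g ≠ 1 → g * a ∉ A ∨ g⁻¹ * a ∉ A

theorem IsDiffuse.exists_isExtremalPoint (hG : IsDiffuse G) {A : Set G} (hfin : A.Finite)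
    (hne : A.Nonempty) : ∃ a, IsExtremalPoint A a := by
  lift A to Finset G using hfin
  exact hG A hne

theorem not_isExtremalPoint_zpow {A : Set G} {g : G} (hg : g ≠ 1) {i : ℤ}
    (hsucc : g ^ (i + 1) ∈ A) (hpred : g ^ (i - 1) ∈ A) : ¬ IsExtremalPoint A (g ^ i) := by
  rintro ⟨-, h⟩
  rcases h g hg with h | h
  · exact h (by rwa [← zpow_one_add, add_comm])
  · exact h (by rwa [← zpow_neg_one, ← zpow_add, neg_add_eq_sub])

theorem not_isExtremalPoint_of_semiconjBy_inv {A : Set G} {a v : G} (h : SemiconjBy v a a⁻¹)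
    (hne : v ≠ a) (hv : v ∈ A) (hv' : v⁻¹ ∈ A) : ¬ IsExtremalPoint A a := by
  rintro ⟨-, hext⟩
  have hreflect : (v * a⁻¹)⁻¹ * a = v⁻¹ := by
    rw [mul_inv_rev, inv_inv, ← h.inv_symm_left.eq, inv_mul_cancel_right]
  rcases hext (v * a⁻¹) (mul_inv_eq_one.not.mpr hne) with h | h
  · exact h (by rwa [inv_mul_cancel_right])
  · exact h (by rwa [hreflect])

theorem IsDiffuse.eq_one_of_isOfFinOrder (hG : IsDiffuse G) {g : G} (hg : IsOfFinOrder g) :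
    g = 1 := by
  by_contra hne
  obtain ⟨a, ha⟩ := hG.exists_isExtremalPoint (finite_zpowers.mpr hg) ⟨1, one_mem _⟩
  obtain ⟨i, rfl⟩ := ha.1
  exact not_isExtremalPoint_zpow hne (Subgroup.zpow_mem_zpowers g _)
    (Subgroup.zpow_mem_zpowers g _) ha

/-- The powers of `g` with exponents from `-2` to `2`. The set without extremal points is the union
of two such sets. -/
def shortPowers (g : G) : Set G := (g ^ ·) '' Set.Icc (-2 : ℤ) 2

theorem zpow_mem_shortPowers (g : G) {i : ℤ} (hlow : -2 ≤ i) (hhigh : i ≤ 2) :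
    g ^ i ∈ shortPowers g :=
  ⟨i, ⟨hlow, hhigh⟩, rfl⟩

theorem self_mem_shortPowers (g : G) : g ∈ shortPowers g := by
  simpa using zpow_mem_shortPowers g (i := 1) (by decide) (by decide)

theorem inv_mem_shortPowers (g : G) : g⁻¹ ∈ shortPowers g := by
  simpa using zpow_mem_shortPowers g (i := -1) (by decide) (by decide)

theorem finite_shortPowers (g : G) : (shortPowers g).Finite :=
  (Set.finite_Icc _ _).image _

theorem not_isExtremalPoint_of_mem_shortPowers {A : Set G} {x y : G}
    (hyx : SemiconjBy y (x ^ 2) (x ^ 2)⁻¹) (hcomm : ¬ Commute x y)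
    (hx : shortPowers x ⊆ A) (hy : shortPowers y ⊆ A) {a : G} (ha : a ∈ shortPowers x) :
    ¬ IsExtremalPoint A a := by
  obtain ⟨i, ⟨hlow, hhigh⟩, rfl⟩ := ha
  have x_ne_one : x ≠ 1 := by
    rintro rfl
    exact hcomm (Commute.one_left y)
  have y_ne_zpow (n : ℤ) : y ≠ x ^ n := by
    rintro rfl
    exact hcomm (Commute.self_zpow x n)
  have end_case (h : SemiconjBy y (x ^ i) (x ^ i)⁻¹) : ¬ IsExtremalPoint A (x ^ i) :=
    not_isExtremalPoint_of_semiconjBy_inv h (y_ne_zpow i) (hy (self_mem_shortPowers y))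
      (hy (inv_mem_shortPowers y))
  obtain rfl | rfl | ⟨hlow', hhigh'⟩ : i = -2 ∨ i = 2 ∨ -1 ≤ i ∧ i ≤ 1 := by lia
  · exact end_case (by simpa only [zpow_neg, zpow_ofNat] using hyx.inv_right)
  · exact end_case (by simpa only [zpow_ofNat] using hyx)
  · exact not_isExtremalPoint_zpow x_ne_one (hx (zpow_mem_shortPowers x (by lia) (by lia)))
      (hx (zpow_mem_shortPowers x (by lia) (by lia)))

theorem IsDiffuse.commute_of_semiconjBy_sq_inv (hG : IsDiffuse G) {x y : G}
    (hxy : SemiconjBy x (y ^ 2) (y ^ 2)⁻¹) (hyx : SemiconjBy y (x ^ 2) (x ^ 2)⁻¹) :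
    Commute x y := by
  by_contra hcomm
  obtain ⟨a, ha⟩ := hG.exists_isExtremalPoint
    ((finite_shortPowers x).union (finite_shortPowers y)) ⟨x, Or.inl (self_mem_shortPowers x)⟩
  rcases ha.1 with hax | hay
  · exact not_isExtremalPoint_of_mem_shortPowers hyx hcomm
      Set.subset_union_left Set.subset_union_right hax ha
  · exact not_isExtremalPoint_of_mem_shortPowers hxy (hcomm ∘ Commute.symm)
      Set.subset_union_right Set.subset_union_left hay ha

theorem IsDiffuse.eq_one_of_commute_of_semiconjBy_sq_inv (hG : IsDiffuse G) {x y : G}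
    (hcomm : Commute x y) (hxy : SemiconjBy x (y ^ 2) (y ^ 2)⁻¹) : y = 1 := by
  have sq_eq_inv : y ^ 2 = (y ^ 2)⁻¹ :=
    mul_right_cancel ((hcomm.pow_right 2).eq.symm.trans hxy.eq)
  have pow_four_eq_one : y ^ 4 = 1 := by
    rw [pow_add y 2 2, mul_eq_one_iff_eq_inv, ← sq_eq_inv]
  exact hG.eq_one_of_isOfFinOrder (isOfFinOrder_iff_pow_eq_one.mpr ⟨4, by decide, pow_four_eq_one⟩)

theorem semiconjBy_inv_of_inv_mul_mul_mul_eq_one {v w : G} (h : v⁻¹ * w * v * w = 1) :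
    SemiconjBy v w w⁻¹ := by
  rw [SemiconjBy, eq_inv_mul_iff_mul_eq, eq_comm, ← inv_mul_eq_one]
  simpa only [mul_assoc] using h

theorem hwX_semiconjBy_hwY_sq_inv : SemiconjBy hwX (hwY ^ 2) (hwY ^ 2)⁻¹ :=
  semiconjBy_inv_of_inv_mul_mul_mul_eq_one (PresentedGroup.one_of_mem (rels := hwRels) (Or.inl rfl))

theorem hwY_semiconjBy_hwX_sq_inv : SemiconjBy hwY (hwX ^ 2) (hwX ^ 2)⁻¹ :=
  semiconjBy_inv_of_inv_mul_mul_mul_eq_one (PresentedGroup.one_of_mem (rels := hwRels) (Or.inr rfl))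

instance : Nontrivial HantzscheWendtGroup := by
  let parity : Fin 2 → Multiplicative (ZMod 2) := fun _ => Multiplicative.ofAdd 1
  have parity_rels : ∀ r ∈ hwRels, FreeGroup.lift parity r = 1 := by
    rintro r (rfl | rfl) <;>
      simp only [map_mul, map_inv, map_pow, FreeGroup.lift_apply_of] <;> decide
  refine ⟨hwX, 1, fun hX => ?_⟩
  have parity_hwX : PresentedGroup.toGroup parity_rels hwX = Multiplicative.ofAdd 1 :=
    PresentedGroup.toGroup.of parity_rels
  rw [hX, map_one] at parity_hwX
  exact absurd parity_hwX (by decide)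

theorem hw_not_diffuse_general {f : HantzscheWendtGroup →* G} (hf : f ≠ 1) : ¬ IsDiffuse G := by
  intro hG
  have hXY : SemiconjBy (f hwX) (f hwY ^ 2) (f hwY ^ 2)⁻¹ := by
    simpa only [map_pow, map_inv] using hwX_semiconjBy_hwY_sq_inv.map f
  have hYX : SemiconjBy (f hwY) (f hwX ^ 2) (f hwX ^ 2)⁻¹ := by
    simpa only [map_pow, map_inv] using hwY_semiconjBy_hwX_sq_inv.map f
  have hcomm : Commute (f hwX) (f hwY) := hG.commute_of_semiconjBy_sq_inv hXY hYX
  refine hf (PresentedGroup.ext (Fin.forall_fin_two.mpr ⟨?_, ?_⟩))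
  · exact hG.eq_one_of_commute_of_semiconjBy_sq_inv hcomm.symm hYX
  · exact hG.eq_one_of_commute_of_semiconjBy_sq_inv hcomm hXY

/-- The Hantzsche–Wendt group is not diffuse. -/
theorem hw_not_diffuse : ¬ IsDiffuse HantzscheWendtGroup :=
  let ⟨g, hg⟩ := exists_ne (1 : HantzscheWendtGroup)
  hw_not_diffuse_general (f := MonoidHom.id _) fun h => hg (DFunLike.congr_fun h g)
end
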